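/- Let b, m, n be positive integers with b ≥ 2, and let L be the set of tuples (a_0, …, a_{m−1}, b_0, …, b_{n−1}) of integers with 0 ≤ a_r ≤ b−1 for every r ∈ {0, …, m−1} and 0 ≤ b_s ≤ min{ min(a_r, b−1−a_r) : r ∈ {0, …, m−1} } for every s ∈ {0, …, n−1}. If b is odd, then #L = 2^{−n}·((b+1)^n + Σ_{i=1}^{(b−1)/2} ((2i+1)^m − (2i−1)^m)(b−2i+1)^n). If b is even, then #L = 2^{m−n}·Σ_{i=1}^{b/2} (i^m − (i−1)^m)(b−2i+2)^n. -/

import Mathlib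

/-! Only the depth `t = min_r min (a_r, b - 1 - a_r)` of `a` below the boundary of the cube
`{0, …, b - 1}^m` constrains the `b_s`, leaving `(t + 1) ^ n` choices for them. The points of depth
at least `t` form the concentric cube `{t, …, b - 1 - t}^m` of side `b - 2t`, so those of depth
exactly `t` are counted by `(b - 2t) ^ m - (b - 2t - 2) ^ m`. Counting the layers from the centre
outwards, `i = ⌊b / 2⌋ - t`, gives both formulas. -/

open Finset

theorem sum_comp_eq_sum_range_card_sub_nsmul {α M : Type*} [AddCommMonoid M] {s : Finset α}
    {f : α → ℕ} {N : ℕ} (hf : ∀ a ∈ s, f a < N) (g : ℕ → M) :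
    ∑ a ∈ s, g (f a) = ∑ t ∈ range N, (#{a ∈ s | t ≤ f a} - #{a ∈ s | t + 1 ≤ f a}) • g t := by
  classical
  rw [← sum_fiberwise_of_maps_to' (fun a ha ↦ mem_range.2 (hf a ha))]
  refine sum_congr rfl fun t _ ↦ ?_
  have upper_subset : {a ∈ s | t + 1 ≤ f a} ⊆ {a ∈ s | t ≤ f a} :=
    monotone_filter_right s fun _ _ ↦ Nat.le_of_succ_le
  have fiber_eq_sdiff : {a ∈ s | f a = t} = {a ∈ s | t ≤ f a} \ {a ∈ s | t + 1 ≤ f a} := by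
    ext a
    simp only [mem_filter, mem_sdiff]
    grind
  rw [sum_const, fiber_eq_sdiff, card_sdiff_of_subset upper_subset]

theorem sum_range_eq_sum_Icc_one_sub {M : Type*} [AddCommMonoid M] (f : ℕ → M) (k : ℕ) :
    ∑ t ∈ range k, f t = ∑ i ∈ Icc 1 k, f (k - i) := by
  rw [← sum_range_reflect, range_eq_Ico, ← Ico_add_one_right_eq_Icc, ← sum_Ico_add' _ 0 k 1]
  simp only [Nat.sub_sub, add_comm]

section Cube

variable {ι κ : Type*} [Fintype ι] [Nonempty ι] [Fintype κ]

/-- The distance from the point `a` of the cube `{0, …, b - 1}^ι` to the boundary of the cube,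
so that boundary points have depth `0`. It is meaningful only if all coordinates are less than
`b`, because `b - 1 - a r` is a truncated subtraction. -/
def cubeDepth (b : ℕ) (a : ι → ℕ) : ℕ :=
  univ.inf' univ_nonempty fun r ↦ min (a r) (b - 1 - a r)

theorem le_cubeDepth_iff {b t : ℕ} {a : ι → ℕ} :
    t ≤ cubeDepth b a ↔ ∀ r, t ≤ min (a r) (b - 1 - a r) := by
  simp [cubeDepth]

theorem two_mul_cubeDepth_lt {b : ℕ} {a : ι → ℕ} (ha : ∀ r, a r < b) : 2 * cubeDepth b a < b := by
  obtain ⟨r⟩ := ‹Nonempty ι›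
  have depth_le := le_cubeDepth_iff.1 (le_refl (cubeDepth b a)) r
  have := ha r
  omega

theorem filter_forall_le_min_eq_piFinset [DecidableEq κ] {b : ℕ} {a : ι → ℕ}
    (ha : ∀ r, a r < b) [DecidablePred fun y : κ → ℕ ↦ ∀ s r, y s ≤ min (a r) (b - 1 - a r)] :
    {y ∈ Fintype.piFinset fun _ : κ ↦ range b | ∀ s r, y s ≤ min (a r) (b - 1 - a r)} =
      Fintype.piFinset fun _ ↦ range (cubeDepth b a + 1) := by
  have depth_lt := two_mul_cubeDepth_lt ha
  ext y
  simp only [mem_filter, Fintype.mem_piFinset, mem_range, ← le_cubeDepth_iff, ← forall_and]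
  exact forall_congr' fun s ↦ by omega

variable [DecidableEq ι]

theorem filter_le_cubeDepth (b t : ℕ) :
    {a ∈ Fintype.piFinset fun _ : ι ↦ range b | t ≤ cubeDepth b a} =
      Fintype.piFinset fun _ ↦ Ico t (b - t) := by
  ext a
  simp only [mem_filter, Fintype.mem_piFinset, le_cubeDepth_iff, mem_range, mem_Ico, ← forall_and]
  exact forall_congr' fun r ↦ by omega

theorem card_filter_le_cubeDepth (b t : ℕ) :
    #{a ∈ Fintype.piFinset fun _ : ι ↦ range b | t ≤ cubeDepth b a} =
      (b - 2 * t) ^ Fintype.card ι := by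
  rw [filter_le_cubeDepth, Fintype.card_piFinset, prod_const, card_univ, Nat.card_Ico,
    Nat.sub_sub, two_mul]

theorem sum_comp_cubeDepth {M : Type*} [AddCommMonoid M] (b : ℕ) (g : ℕ → M) :
    ∑ a ∈ Fintype.piFinset fun _ : ι ↦ range b, g (cubeDepth b a) =
      ∑ t ∈ range ((b + 1) / 2),
        ((b - 2 * t) ^ Fintype.card ι - (b - 2 * (t + 1)) ^ Fintype.card ι) • g t := by
  have depth_lt : ∀ a ∈ Fintype.piFinset fun _ : ι ↦ range b, cubeDepth b a < (b + 1) / 2 := by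
    intro a ha
    have := two_mul_cubeDepth_lt fun r ↦ mem_range.1 (Fintype.mem_piFinset.1 ha r)
    omega
  simp only [sum_comp_eq_sum_range_card_sub_nsmul depth_lt, card_filter_le_cubeDepth]

theorem card_filter_forall_le_min [DecidableEq κ] (b : ℕ)
    [DecidablePred fun x : (ι → ℕ) × (κ → ℕ) ↦ ∀ s r, x.2 s ≤ min (x.1 r) (b - 1 - x.1 r)] :
    #{x ∈ (Fintype.piFinset fun _ : ι ↦ range b) ×ˢ (Fintype.piFinset fun _ : κ ↦ range b) |
        ∀ s r, x.2 s ≤ min (x.1 r) (b - 1 - x.1 r)} =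
      ∑ t ∈ range ((b + 1) / 2),
        ((b - 2 * t) ^ Fintype.card ι - (b - 2 * (t + 1)) ^ Fintype.card ι) *
          (t + 1) ^ Fintype.card κ := by
  calc
    _ = ∑ a ∈ Fintype.piFinset fun _ : ι ↦ range b,
          #{y ∈ Fintype.piFinset fun _ : κ ↦ range b |
            ∀ s r, y s ≤ min (a r) (b - 1 - a r)} := by
      simp only [card_filter, sum_product]
      -- the two sides differ only in their decidability instances
      congr!
    _ = ∑ a ∈ Fintype.piFinset fun _ : ι ↦ range b, (cubeDepth b a + 1) ^ Fintype.card κ := by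
      refine sum_congr rfl fun a ha ↦ ?_
      rw [filter_forall_le_min_eq_piFinset fun r ↦ mem_range.1 (Fintype.mem_piFinset.1 ha r),
        Fintype.card_piFinset, prod_const, card_univ, card_range]
    _ = _ := by
      simp only [sum_comp_cubeDepth b fun t ↦ (t + 1) ^ Fintype.card κ, smul_eq_mul]

end Cube

theorem two_pow_mul_sum_range_of_odd {b m : ℕ} (hb : Odd b) (hm : m ≠ 0) (n : ℕ) :
    2 ^ n * ∑ t ∈ range ((b + 1) / 2), ((b - 2 * t) ^ m - (b - 2 * (t + 1)) ^ m) * (t + 1) ^ n =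
      (b + 1) ^ n + ∑ i ∈ Icc 1 ((b - 1) / 2),
        ((2 * i + 1) ^ m - (2 * i - 1) ^ m) * (b - 2 * i + 1) ^ n := by
  obtain ⟨k, rfl⟩ := hb
  have centre : 2 ^ n * (((2 * k + 1 - 2 * k) ^ m - (2 * k + 1 - 2 * (k + 1)) ^ m) * (k + 1) ^ n) =
      (2 * k + 1 + 1) ^ n := by
    rw [show 2 * k + 1 - 2 * k = 1 by omega, show 2 * k + 1 - 2 * (k + 1) = 0 by omega,
      one_pow, zero_pow hm, Nat.sub_zero, one_mul, ← mul_pow, mul_add_one]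
  rw [show (2 * k + 1 + 1) / 2 = k + 1 by omega, show (2 * k + 1 - 1) / 2 = k by omega,
    sum_range_succ, mul_add, centre, add_comm, sum_range_eq_sum_Icc_one_sub, mul_sum]
  congr 1
  refine sum_congr rfl fun i hi ↦ ?_
  obtain ⟨hi_pos, hi_le⟩ := mem_Icc.1 hi
  rw [show 2 * k + 1 - 2 * (k - i) = 2 * i + 1 by omega,
    show 2 * k + 1 - 2 * (k - i + 1) = 2 * i - 1 by omega,
    show 2 * k + 1 - 2 * i + 1 = 2 * (k - i + 1) by omega, mul_pow, mul_left_comm]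

theorem two_pow_mul_sum_range_of_even {b : ℕ} (hb : Even b) (m n : ℕ) :
    2 ^ n * ∑ t ∈ range ((b + 1) / 2), ((b - 2 * t) ^ m - (b - 2 * (t + 1)) ^ m) * (t + 1) ^ n =
      2 ^ m * ∑ i ∈ Icc 1 (b / 2), (i ^ m - (i - 1) ^ m) * (b - 2 * i + 2) ^ n := by
  obtain ⟨k, rfl⟩ := hb
  rw [show (k + k + 1) / 2 = k by omega, show (k + k) / 2 = k by omega,
    sum_range_eq_sum_Icc_one_sub, mul_sum, mul_sum]
  refine sum_congr rfl fun i hi ↦ ?_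
  obtain ⟨hi_pos, hi_le⟩ := mem_Icc.1 hi
  rw [show k + k - 2 * (k - i) = 2 * i by omega,
    show k + k - 2 * (k - i + 1) = 2 * (i - 1) by omega,
    show k + k - 2 * i + 2 = 2 * (k - i + 1) by omega, mul_pow, mul_pow, mul_pow, ← Nat.mul_sub]
  ring

/-- Lemma A.3: cardinality of the set of tuples `(a₀, …, a_{m−1}, b₀, …, b_{n−1})` with
`0 ≤ a_r ≤ b−1` and `0 ≤ b_s ≤ min_r min(a_r, b−1−a_r)`, for `b` odd and for `b` even.
The rational identities are stated with denominators cleared (multiplying by `2^n`). -/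
theorem stmt_6 (b m n : ℕ) (hb : 2 ≤ b) (hm : 0 < m) (hn : 0 < n) :
    (Odd b →
      2 ^ n * (((Fintype.piFinset fun _ : Fin m => Finset.range b) ×ˢ
        (Fintype.piFinset fun _ : Fin n => Finset.range b)).filter
        (fun x => ∀ s : Fin n, ∀ r : Fin m, x.2 s ≤ min (x.1 r) (b - 1 - x.1 r))).card
      = (b + 1) ^ n + ∑ i ∈ Finset.Icc 1 ((b - 1) / 2),
          ((2 * i + 1) ^ m - (2 * i - 1) ^ m) * (b - 2 * i + 1) ^ n) ∧
    (Even b →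
      2 ^ n * (((Fintype.piFinset fun _ : Fin m => Finset.range b) ×ˢ
        (Fintype.piFinset fun _ : Fin n => Finset.range b)).filter
        (fun x => ∀ s : Fin n, ∀ r : Fin m, x.2 s ≤ min (x.1 r) (b - 1 - x.1 r))).card
      = 2 ^ m * ∑ i ∈ Finset.Icc 1 (b / 2),
          (i ^ m - (i - 1) ^ m) * (b - 2 * i + 2) ^ n) := by
  have : NeZero m := ⟨hm.ne'⟩
  rw [card_filter_forall_le_min, Fintype.card_fin, Fintype.card_fin]
  exact ⟨fun h_odd ↦ two_pow_mul_sum_range_of_odd h_odd hm.ne' n,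
    fun h_even ↦ two_pow_mul_sum_range_of_even h_even m n⟩
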